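/- For the sequence a_n = 1/(2n-1) (the terms of Leibniz's series for π/4), the iterated forward differences satisfy, for every n ≥ 0, Δ^n a_1 = 2^n · n! / (1·3·5⋯(2n+1)), i.e. Δ^n a_1 = 2^n n! / (2n+1)!!. -/

import Mathlib

/-- Iterated forward difference: `iterDiff a 0 n = a n`,
`iterDiff a (r+1) n = iterDiff a r n - iterDiff a r (n+1)`. -/
noncomputable def iterDiff (a : ℕ → ℝ) : ℕ → ℕ → ℝ
  | 0, n => a n
  | r + 1, n => iterDiff a r n - iterDiff a r (n + 1)

theorem iterDiff_general (a : ℕ → ℝ) (ha : ∀ n, a n = 1 / (2 * (n : ℝ) - 1)) (r : ℕ) :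
    ∀ m : ℕ, iterDiff a r (m + 1) = 2 ^ r * (Nat.factorial r : ℝ) /
      ∏ i ∈ Finset.range (r + 1), (2 * (m : ℝ) + 1 + 2 * (i : ℝ)) := by
  induction r with
  | zero =>
    intro m
    simp only [iterDiff, ha]
    push_cast
    simp
    ring
  | succ r ih =>
    intro m
    have hP : ∀ k : ℕ, (∏ i ∈ Finset.range (r + 1), (2 * (k : ℝ) + 1 + 2 * (i : ℝ))) ≠ 0 :=
      fun k => Finset.prod_ne_zero_iff.mpr fun i _ => by positivity
    have h1 := Finset.prod_range_succ (fun i : ℕ => 2 * (m : ℝ) + 1 + 2 * (i : ℝ)) (r + 1)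
    have h2 := Finset.prod_range_succ' (fun i : ℕ => 2 * (m : ℝ) + 1 + 2 * (i : ℝ)) (r + 1)
    have h3 : (∏ i ∈ Finset.range (r + 1), (2 * (m : ℝ) + 1 + 2 * ((i + 1 : ℕ) : ℝ)))
        = ∏ i ∈ Finset.range (r + 1), (2 * ((m + 1 : ℕ) : ℝ) + 1 + 2 * (i : ℝ)) :=
      Finset.prod_congr rfl fun i _ => by push_cast; ring
    rw [h3] at h2
    have hA := hP m
    have hB := hP (m + 1)
    rw [iterDiff, ih m, ih (m + 1), h1, Nat.factorial_succ]
    rw [h1] at h2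
    generalize (∏ i ∈ Finset.range (r + 1), (2 * (m : ℝ) + 1 + 2 * (i : ℝ))) = A at *
    generalize (∏ i ∈ Finset.range (r + 1), (2 * ((m + 1 : ℕ) : ℝ) + 1 + 2 * (i : ℝ))) = B at *
    push_cast at h2 ⊢
    have hc : (2 * (m : ℝ) + 1 + 2 * ((r : ℝ) + 1)) ≠ 0 := by positivity
    rw [div_sub_div _ _ hA hB, div_eq_div_iff (mul_ne_zero hA hB) (mul_ne_zero hA hc)]
    rw [pow_succ]
    linear_combination (-2 ^ r * (r.factorial : ℝ) * A) * h2

theorem doubleFactorial_odd_prod (n : ℕ) : (Nat.doubleFactorial (2 * n + 1) : ℝ)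
    = ∏ i ∈ Finset.range (n + 1), (2 * ((0 : ℕ) : ℝ) + 1 + 2 * (i : ℝ)) := by
  induction n with
  | zero => simp
  | succ n ih =>
    rw [Finset.prod_range_succ, ← ih, show 2 * (n + 1) + 1 = (2 * n + 1) + 2 by ring,
      Nat.doubleFactorial_add_two]
    push_cast
    ring

/-- For the terms `a n = 1 / (2n - 1)` of Leibniz's series for `π/4`, the iterated
differences at the first term are `Δ^n a 1 = 2^n · n! / (1·3·5⋯(2n+1)) = 2^n n!/(2n+1)‼`. -/
theorem iterDiff_leibniz (a : ℕ → ℝ) (ha : ∀ n, a n = 1 / (2 * (n : ℝ) - 1)) :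
    ∀ n : ℕ, iterDiff a n 1
      = 2 ^ n * (Nat.factorial n : ℝ) / (Nat.doubleFactorial (2 * n + 1) : ℝ) := by
  intro n
  rw [doubleFactorial_odd_prod]
  exact iterDiff_general a ha n 0
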